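/- Every reduced Gröbner basis G of the ideal ⟨𝓕⟩ ⊆ Z2[X] with respect to the weighted order ≼_w satisfies |G| ≥ 2^(2^n) and moreover |{p ∈ G : deg(p) ≥ 2^(2^n)}| ≥ 2^(2^n), where deg(p) denotes the maximal total degree of a monomial occurring in p. -/

import Mathlib

open MvPolynomial

/-- Monomials in the variables `σ`, represented by their exponent vectors. -/
abbrev Mon (σ : Type*) := σ →₀ ℕ

/-- A monomial order: a total order on monomials such that `1 ≼ t` for every monomial `t`
and `t ≼ u → t·v ≼ u·v` (written additively on exponent vectors). -/
structure MonOrd (σ : Type*) where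
  le : Mon σ → Mon σ → Prop
  le_refl : ∀ t, le t t
  le_trans : ∀ t u v, le t u → le u v → le t v
  le_antisymm : ∀ t u, le t u → le u t → t = u
  le_total : ∀ t u, le t u ∨ le u t
  zero_le : ∀ t, le 0 t
  add_le_add : ∀ t u v, le t u → le (t + v) (u + v)

/-- Strict version of a monomial order. -/
def MonOrd.lt {σ : Type*} (μ : MonOrd σ) (t u : Mon σ) : Prop := μ.le t u ∧ t ≠ u

/-- The extension of a monomial order (given by the relation `r` on monomials) to polynomials:
`g ≼ f` iff `g = f` or the greatest monomial on which `f` and `g` differ occurs in `f`.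
(This is the closed form of the recursive definition: `g ≼ f` iff `g = f`, or
`HT g ≺ HT f`, or `HT g = HT f` and `g - HT g ≼ f - HT f`, with `0` the least polynomial.) -/
def polyLe {σ : Type*} (r : Mon σ → Mon σ → Prop) (g f : MvPolynomial σ (ZMod 2)) : Prop :=
  g = f ∨ ∃ t, t ∈ f.support ∧ t ∉ g.support ∧
    ∀ u : Mon σ, ((u ∈ f.support ∧ u ∉ g.support) ∨ (u ∈ g.support ∧ u ∉ f.support)) → r u t

/-- Strict extension of a monomial order to polynomials. -/
def polyLt {σ : Type*} (r : Mon σ → Mon σ → Prop) (g f : MvPolynomial σ (ZMod 2)) : Prop :=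
  polyLe r g f ∧ g ≠ f

/-- `S_F`: the set of non-residual polynomials with respect to `F` and the monomial order `r`,
i.e. those `f` admitting a `g` with `f + g ∈ ⟨F⟩` and `g ≺ f`. -/
def SF {σ : Type*} (r : Mon σ → Mon σ → Prop) (F : Set (MvPolynomial σ (ZMod 2))) :
    Set (MvPolynomial σ (ZMod 2)) :=
  {f | ∃ g, f + g ∈ Ideal.span F ∧ polyLt r g f}

/-- `t` is the head monomial (`r`-greatest monomial) of the polynomial `f`. -/
def IsHT {σ : Type*} (r : Mon σ → Mon σ → Prop) (f : MvPolynomial σ (ZMod 2)) (t : Mon σ) :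
    Prop :=
  t ∈ f.support ∧ ∀ u ∈ f.support, r u t

/-- `HT(S)`: the set of head monomials (as polynomials) of the nonzero elements of `S`. -/
def HTset {σ : Type*} (r : Mon σ → Mon σ → Prop) (S : Set (MvPolynomial σ (ZMod 2))) :
    Set (MvPolynomial σ (ZMod 2)) :=
  {p | ∃ f ∈ S, f ≠ 0 ∧ ∃ t, IsHT r f t ∧ p = monomial t 1}

/-- The divisibility (componentwise) order `◁` on monomials. -/
def triMon {σ : Type*} (t u : Mon σ) : Prop := ∀ x, t x ≤ u x

/-- The order `◁` on polynomials: `p ◁ q` iff there is an injective map `φ` from the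
monomials of `p` to the monomials of `q` with `t ◁ φ t` for each monomial `t` of `p`. -/
def triPoly {σ : Type*} (p q : MvPolynomial σ (ZMod 2)) : Prop :=
  ∃ φ : Mon σ → Mon σ, Set.InjOn φ ↑p.support ∧ ∀ t ∈ p.support, φ t ∈ q.support ∧ triMon t (φ t)

/-- Upward closure with respect to `◁`. -/
def upClo {σ : Type*} (A : Set (MvPolynomial σ (ZMod 2))) : Set (MvPolynomial σ (ZMod 2)) :=
  {q | ∃ p ∈ A, triPoly p q}

/-- `Min_◁(A)`: the `◁`-minimal elements of `A`. -/
def minTri {σ : Type*} (A : Set (MvPolynomial σ (ZMod 2))) : Set (MvPolynomial σ (ZMod 2)) :=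
  {p | p ∈ A ∧ ∀ q ∈ A, triPoly q p → q = p}

/-- `G` is a Gröbner basis of the ideal `I` with respect to the monomial order `r`. -/
def IsGB {σ : Type*} (r : Mon σ → Mon σ → Prop) (G : Finset (MvPolynomial σ (ZMod 2)))
    (I : Ideal (MvPolynomial σ (ZMod 2))) : Prop :=
  (↑G : Set (MvPolynomial σ (ZMod 2))) ⊆ ↑I ∧
    Ideal.span (↑G : Set (MvPolynomial σ (ZMod 2))) = I ∧
    Ideal.span (HTset r (↑I : Set (MvPolynomial σ (ZMod 2)))) = Ideal.span (HTset r ↑G)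

/-- `G` is a reduced Gröbner basis of `I` with respect to `r`. -/
def IsReducedGB {σ : Type*} (r : Mon σ → Mon σ → Prop) (G : Finset (MvPolynomial σ (ZMod 2)))
    (I : Ideal (MvPolynomial σ (ZMod 2))) : Prop :=
  IsGB r G I ∧ ∀ f ∈ G, ¬ ∀ t ∈ f.support,
    (monomial t 1 : MvPolynomial σ (ZMod 2)) ∈
      Ideal.span (HTset r ((↑G : Set (MvPolynomial σ (ZMod 2))) \ {f}))

/-- The variable set `X`: the special variables `s, ℓ, c, c̄, b, b̄` together with, for each
`0 ≤ i ≤ n`, the variables `s_i, f_i, q_{ji}, c_{ji}, b_{ji}` (`1 ≤ j ≤ 4`, encoded by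
`j : Fin 4`) and their barred copies (`bar = true`). -/
inductive MVar (n : ℕ) : Type where
  | vs | vl | vc | vcb | vb | vbb
  | vS (bar : Bool) (i : Fin (n+1))
  | vF (bar : Bool) (i : Fin (n+1))
  | vQ (bar : Bool) (j : Fin 4) (i : Fin (n+1))
  | vC (bar : Bool) (j : Fin 4) (i : Fin (n+1))
  | vB (bar : Bool) (j : Fin 4) (i : Fin (n+1))
deriving DecidableEq

open MVar

abbrev MPoly (n : ℕ) := MvPolynomial (MVar n) (ZMod 2)

/-- `e(n) = 2^(2^n)`. -/
def en (n : ℕ) : ℕ := 2 ^ 2 ^ n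

/-- The set `P_0` (barred copy if `bar = true`). -/
def P0 (n : ℕ) (bar : Bool) : Set (MPoly n) :=
  {p | ∃ j : Fin 4, p =
    X (vB bar j 0) ^ 2 * X (vC bar j 0) * X (vF bar 0) + X (vC bar j 0) * X (vS bar 0)}

/-- The set `P_m` for `m = i+1`, `i : Fin n` (barred copy if `bar = true`).
Here `i.succ` plays the role of `m` and `i.castSucc` the role of `m-1`; the indices
`1,2,3,4` of the paper are encoded as `0,1,2,3 : Fin 4`. -/
def Pm (n : ℕ) (bar : Bool) (i : Fin n) : Set (MPoly n) :=
  ({ X (vQ bar 0 i.succ) * X (vC bar 0 i.castSucc) * X (vS bar i.castSucc) + X (vS bar i.succ),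
    X (vQ bar 1 i.succ) * X (vC bar 1 i.castSucc) * X (vS bar i.castSucc)
      + X (vQ bar 0 i.succ) * X (vB bar 0 i.castSucc) * X (vC bar 0 i.castSucc)
        * X (vF bar i.castSucc),
    X (vQ bar 2 i.succ) * X (vC bar 2 i.castSucc) * X (vF bar i.castSucc)
      + X (vQ bar 1 i.succ) * X (vC bar 1 i.castSucc) * X (vF bar i.castSucc),
    X (vQ bar 2 i.succ) * X (vB bar 0 i.castSucc) * X (vC bar 2 i.castSucc)
        * X (vS bar i.castSucc)
      + X (vQ bar 1 i.succ) * X (vB bar 3 i.castSucc) * X (vC bar 1 i.castSucc)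
        * X (vS bar i.castSucc),
    X (vQ bar 3 i.succ) * X (vB bar 3 i.castSucc) * X (vC bar 3 i.castSucc)
        * X (vF bar i.castSucc)
      + X (vQ bar 2 i.succ) * X (vC bar 2 i.castSucc) * X (vS bar i.castSucc),
    X (vQ bar 3 i.succ) * X (vC bar 3 i.castSucc) * X (vS bar i.castSucc)
      + X (vF bar i.succ) } : Set (MPoly n))
  ∪ {p | ∃ j : Fin 4, p =
      X (vQ bar 1 i.succ) * X (vB bar 2 i.castSucc) * X (vB bar j i.succ) * X (vC bar j i.succ)
          * X (vF bar i.castSucc)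
        + X (vQ bar 1 i.succ) * X (vB bar 1 i.castSucc) * X (vC bar j i.succ)
          * X (vF bar i.castSucc)}

/-- The set `P = P_0 ∪ P_1 ∪ ⋯ ∪ P_n`; for `bar = true` this is the barred copy `P̄`
(the image of `P` under the substitution replacing each variable by its barred version). -/
def PP (n : ℕ) (bar : Bool) : Set (MPoly n) := P0 n bar ∪ ⋃ i : Fin n, Pm n bar i

/-- The set `G` of seven extra binomials. -/
def GG (n : ℕ) : Set (MPoly n) :=
  { X (vB false 3 (Fin.last n)) * X vl * X vb + X vl * X vc,
    X (vB false 3 (Fin.last n)) * X vl * X vbb + X vl * X vcb,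
    X (vC false 3 (Fin.last n)) * X (vF false (Fin.last n)) + X vl,
    X (vC true 3 (Fin.last n)) * X (vF true (Fin.last n))
      + X (vC false 3 (Fin.last n)) * X (vS false (Fin.last n)),
    X (vB true 3 (Fin.last n)) * X (vC false 3 (Fin.last n)) * X (vS false (Fin.last n))
      + X (vC false 3 (Fin.last n)) * X (vS false (Fin.last n)) * X vb,
    X (vB true 3 (Fin.last n)) * X (vC false 3 (Fin.last n)) * X (vS false (Fin.last n))
      + X (vC false 3 (Fin.last n)) * X (vS false (Fin.last n)) * X vbb,
    X (vC true 3 (Fin.last n)) * X (vS true (Fin.last n)) + X vs }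

/-- The set `𝓕 = P ∪ P̄ ∪ G`. -/
def FF (n : ℕ) : Set (MPoly n) := PP n false ∪ PP n true ∪ GG n

/-- The set `C = {ℓ c̄^{m1} c^{m2} : m1 + m2 = e(n)}` of monomials. -/
def Cmon (n : ℕ) : Set (Mon (MVar n)) :=
  {α | ∃ m1 m2 : ℕ, m1 + m2 = en n ∧
    α = Finsupp.single vl 1 + Finsupp.single vcb m1 + Finsupp.single vc m2}

/-- The set `D = {ℓ^j c̄^{m1} c^{m2} : j ∈ {0,1}, j + m1 + m2 ≤ e(n)}` of monomials. -/
def Dmon (n : ℕ) : Set (Mon (MVar n)) :=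
  {α | ∃ j m1 m2 : ℕ, j ≤ 1 ∧ j + m1 + m2 ≤ en n ∧
    α = Finsupp.single vl j + Finsupp.single vcb m1 + Finsupp.single vc m2}

/-- An injective rank function on the variables realizing the variable ordering
(from least to greatest): `s, c, c̄, ℓ, b, b̄`; then `s_0,…,s_n`; `f_0,…,f_n`;
`c_{10},…,c_{1n}; …; c_{40},…,c_{4n}`; `b_{10},…,b_{4n}`; `q_{10},…,q_{4n}`;
then the barred variables in the same pattern. -/
def vrank (n : ℕ) : MVar n → ℕ
  | .vs => 0
  | .vc => 1
  | .vcb => 2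
  | .vl => 3
  | .vb => 4
  | .vbb => 5
  | .vS bar i => 6 + (cond bar (14 * (n+1)) 0) + (i : ℕ)
  | .vF bar i => 6 + (cond bar (14 * (n+1)) 0) + (n+1) + (i : ℕ)
  | .vC bar j i => 6 + (cond bar (14 * (n+1)) 0) + 2*(n+1) + (j : ℕ)*(n+1) + (i : ℕ)
  | .vB bar j i => 6 + (cond bar (14 * (n+1)) 0) + 6*(n+1) + (j : ℕ)*(n+1) + (i : ℕ)
  | .vQ bar j i => 6 + (cond bar (14 * (n+1)) 0) + 10*(n+1) + (j : ℕ)*(n+1) + (i : ℕ)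

/-- The lexicographic monomial order on `X`: `t ≼_lex u` iff `t = u` or the exponents differ
somewhere and at the greatest variable (w.r.t. `vrank`) where they differ, the exponent of
`t` is smaller. -/
def lexLe (n : ℕ) (t u : Mon (MVar n)) : Prop :=
  t = u ∨ ∃ x : MVar n, t x < u x ∧ ∀ y : MVar n, vrank n x < vrank n y → t y = u y

/-- The total degree of a monomial. -/
def mdeg {σ : Type*} (t : Mon σ) : ℕ := t.sum fun _ k => k

/-- The degree lexicographic monomial order. -/
def degLexLe (n : ℕ) (t u : Mon (MVar n)) : Prop :=
  mdeg t < mdeg u ∨ (mdeg t = mdeg u ∧ lexLe n t u)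

/-- Weighted degree of a monomial with respect to a weight map `w`. -/
noncomputable def wdeg {n : ℕ} (w : MVar n → ℝ) (t : Mon (MVar n)) : ℝ :=
  t.sum fun x k => (k : ℝ) * w x

/-- The weighted monomial order determined by the weight map `w`. -/
def wLe {n : ℕ} (w : MVar n → ℝ) (t u : Mon (MVar n)) : Prop := t = u ∨ wdeg w t < wdeg w u


/-! ### Algebraic part: the Mayr–Meyer derivation -/

theorem en_zero : en 0 = 2 := by simp [en]

theorem en_succ (m : ℕ) : en (m+1) = en m * en m := by
  simp only [en]; rw [← pow_add]; congr 1; rw [pow_succ]; ring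

theorem en_pos (m : ℕ) : 0 < en m := by simp [en]

/-- One level of the Mayr–Meyer construction in an arbitrary commutative ring. -/
theorem mm_level {R : Type*} [CommRing R] (e : ℕ) (he : 0 < e) (q c b : Fin 4 → R)
    (s f S F C B : R)
    (ih : ∀ j, c j * s = b j ^ e * c j * f)
    (r1 : q 0 * c 0 * s = S)
    (r2 : q 1 * c 1 * s = q 0 * b 0 * c 0 * f)
    (r3 : q 2 * c 2 * f = q 1 * c 1 * f)
    (r4 : q 2 * b 0 * c 2 * s = q 1 * b 3 * c 1 * s)
    (r5 : q 3 * b 3 * c 3 * f = q 2 * c 2 * s)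
    (r6 : q 3 * c 3 * s = F)
    (r7 : q 1 * b 2 * B * C * f = q 1 * b 1 * C * f) :
    C * S = B ^ (e * e) * C * F := by
  have h7 : ∀ k : ℕ, q 1 * b 1 ^ k * C * f = q 1 * b 2 ^ k * B ^ k * C * f := by
    intro k
    induction k with
    | zero => simp
    | succ k ihk =>
      linear_combination b 1 * ihk - b 2 ^ k * B ^ k * r7
  have loop : q 1 * c 1 * s * C = q 2 * c 2 * s * C * B ^ e := by
    linear_combination q 1 * C * ih 1 + c 1 * h7 e - b 2 ^ e * B ^ e * C * r3
      - q 2 * C * B ^ e * ih 2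
  have loops : ∀ k : ℕ, q 1 * c 1 * s * b 0 ^ k * C
      = q 2 * c 2 * s * b 3 ^ k * C * B ^ (e * (k+1)) := by
    intro k
    induction k with
    | zero => simpa using loop
    | succ k ihk =>
      have : B ^ (e * (k+1+1)) = B ^ (e * (k+1)) * B ^ e := by rw [← pow_add]; congr 1
      rw [this]
      linear_combination b 0 ^ (k+1) * loop + b 0 ^ k * B ^ e * C * r4 + b 3 * B ^ e * ihk
  obtain ⟨k, rfl⟩ : ∃ k, e = k + 1 := ⟨e - 1, by omega⟩
  have := loops k
  linear_combination (-C) * r1 + q 0 * C * ih 0 - b 0 ^ k * C * r2 + this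
    - b 3 ^ k * C * B ^ ((k+1)*(k+1)) * r5 - q 3 * C * B ^ ((k+1)*(k+1)) * ih 3
    + C * B ^ ((k+1)*(k+1)) * r6

theorem mk_eq_of_add_mem {n : ℕ} {I : Ideal (MPoly n)} {x y : MPoly n} (h : x + y ∈ I) :
    Ideal.Quotient.mk I x = Ideal.Quotient.mk I y := by
  rw [Ideal.Quotient.eq]
  rwa [CharTwo.sub_eq_add]

theorem mm_all (n : ℕ) (bar : Bool) (I : Ideal (MPoly n)) (hI : PP n bar ⊆ I) (i : Fin (n+1)) :
    ∀ j : Fin 4, Ideal.Quotient.mk I (X (vC bar j i) * X (vS bar i)) =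
      Ideal.Quotient.mk I (X (vB bar j i) ^ (en i) * X (vC bar j i) * X (vF bar i)) := by
  induction i using Fin.induction with
  | zero =>
    intro j
    symm
    apply mk_eq_of_add_mem
    apply hI
    left
    exact ⟨j, by simp [en]⟩
  | succ i ih =>
    intro j
    have hP : ∀ p ∈ Pm n bar i, p ∈ I := fun p hp => hI (Or.inr (Set.mem_iUnion.2 ⟨i, hp⟩))
    have key := mm_level (R := MPoly n ⧸ I) (en i) (en_pos _)
      (fun j => Ideal.Quotient.mk I (X (vQ bar j i.succ)))
      (fun j => Ideal.Quotient.mk I (X (vC bar j i.castSucc)))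
      (fun j => Ideal.Quotient.mk I (X (vB bar j i.castSucc)))
      (Ideal.Quotient.mk I (X (vS bar i.castSucc)))
      (Ideal.Quotient.mk I (X (vF bar i.castSucc)))
      (Ideal.Quotient.mk I (X (vS bar i.succ)))
      (Ideal.Quotient.mk I (X (vF bar i.succ)))
      (Ideal.Quotient.mk I (X (vC bar j i.succ)))
      (Ideal.Quotient.mk I (X (vB bar j i.succ)))
    simp only [← map_mul, ← map_pow] at key
    have h := key (by simpa using ih)
      (mk_eq_of_add_mem (hP _ (by simp [Pm])))
      (mk_eq_of_add_mem (hP _ (by simp [Pm])))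
      (mk_eq_of_add_mem (hP _ (by simp [Pm])))
      (mk_eq_of_add_mem (hP _ (by simp [Pm])))
      (mk_eq_of_add_mem (hP _ (by simp [Pm])))
      (mk_eq_of_add_mem (hP _ (by simp [Pm])))
      (mk_eq_of_add_mem (hP _ (Or.inr ⟨j, rfl⟩)))
    rw [Fin.val_succ, en_succ]
    exact h

theorem top_ring {R : Type*} [CommRing R] (B4 l b bb c cb C4 F S C4' F' S' B4' s : R) (m1 m2 : ℕ)
    (h : C4 * S = B4 ^ (m1 + m2) * C4 * F) (h' : C4' * S' = B4' ^ (m1 + m2) * C4' * F')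
    (g1 : B4 * l * b = l * c) (g2 : B4 * l * bb = l * cb) (g3 : C4 * F = l)
    (g4 : C4' * F' = C4 * S) (g5 : B4' * C4 * S = C4 * S * b) (g6 : B4' * C4 * S = C4 * S * bb)
    (g7 : C4' * S' = s) : l * cb ^ m1 * c ^ m2 = s := by
  have a1 : ∀ k, B4 ^ k * l * b ^ k = l * c ^ k := by
    intro k
    induction k with
    | zero => simp
    | succ k ih => linear_combination B4 * b * ih + c ^ k * g1
  have a2 : ∀ k, B4 ^ k * l * bb ^ k = l * cb ^ k := by
    intro k
    induction k with
    | zero => simp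
    | succ k ih => linear_combination B4 * bb * ih + cb ^ k * g2
  have a3 : ∀ k, B4' ^ k * C4 * S = C4 * S * b ^ k := by
    intro k
    induction k with
    | zero => simp
    | succ k ih => linear_combination B4' * ih + b ^ k * g5
  have a4 : ∀ k, B4' ^ k * C4 * S = C4 * S * bb ^ k := by
    intro k
    induction k with
    | zero => simp
    | succ k ih => linear_combination B4' * ih + bb ^ k * g6
  rw [pow_add] at h h'
  linear_combination -(cb ^ m1) * a1 m2 - B4 ^ m2 * b ^ m2 * a2 m1
    - B4 ^ m1 * B4 ^ m2 * b ^ m2 * bb ^ m1 * g3 - b ^ m2 * bb ^ m1 * h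
    - b ^ m2 * a4 m1 - B4' ^ m1 * a3 m2 - B4' ^ m1 * B4' ^ m2 * g4 - h' + g7

theorem top_mem (n m1 m2 : ℕ) (hm : m1 + m2 = en n) :
    (X vl * X vcb ^ m1 * X vc ^ m2 + X vs : MPoly n) ∈ Ideal.span (FF n) := by
  have hsub := Ideal.subset_span (s := FF n)
  have k1 := mm_all n false _ (fun p hp => hsub (Or.inl (Or.inl hp))) (Fin.last n) 3
  have k2 := mm_all n true _ (fun p hp => hsub (Or.inl (Or.inr hp))) (Fin.last n) 3
  have hP : ∀ p ∈ GG n, p ∈ Ideal.span (FF n) := fun p hp => hsub (Or.inr hp)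
  rw [← CharTwo.sub_eq_add, ← Ideal.Quotient.eq]
  rw [Fin.val_last, ← hm] at k1 k2
  simp only [map_mul, map_pow] at k1 k2 ⊢
  refine top_ring _ _ (Ideal.Quotient.mk _ (X vb)) (Ideal.Quotient.mk _ (X vbb))
    _ _ _ _ _ _ _ _ _ _ m1 m2 k1 k2 ?_ ?_ ?_ ?_ ?_ ?_ ?_
  all_goals
    simp only [← map_mul]
    exact mk_eq_of_add_mem (hP _ (by simp [GG]))

/-! ### Combinatorial part: invariant of the rewriting system -/

/-- Variables with natural-number levels. -/
inductive NV : Type where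
  | s | l | c | cb | b | bb
  | S (bar : Bool) (i : ℕ)
  | F (bar : Bool) (i : ℕ)
  | Q (bar : Bool) (j : Fin 4) (i : ℕ)
  | C (bar : Bool) (j : Fin 4) (i : ℕ)
  | B (bar : Bool) (j : Fin 4) (i : ℕ)
deriving DecidableEq

/-- The monomial of a single variable. -/
noncomputable abbrev gv (x : NV) : NV →₀ ℕ := Finsupp.single x 1

/-- The relations of level `m`. -/
inductive PRel (bar : Bool) : ℕ → (NV →₀ ℕ) → (NV →₀ ℕ) → Prop
  | p0 (j : Fin 4) : PRel bar 0 (2 • gv (.B bar j 0) + gv (.C bar j 0) + gv (.F bar 0))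
      (gv (.C bar j 0) + gv (.S bar 0))
  | r1 (r : ℕ) : PRel bar (r+1) (gv (.Q bar 0 (r+1)) + gv (.C bar 0 r) + gv (.S bar r))
      (gv (.S bar (r+1)))
  | r2 (r : ℕ) : PRel bar (r+1) (gv (.Q bar 1 (r+1)) + gv (.C bar 1 r) + gv (.S bar r))
      (gv (.Q bar 0 (r+1)) + gv (.B bar 0 r) + gv (.C bar 0 r) + gv (.F bar r))
  | r3 (r : ℕ) : PRel bar (r+1) (gv (.Q bar 2 (r+1)) + gv (.C bar 2 r) + gv (.F bar r))
      (gv (.Q bar 1 (r+1)) + gv (.C bar 1 r) + gv (.F bar r))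
  | r4 (r : ℕ) : PRel bar (r+1)
      (gv (.Q bar 2 (r+1)) + gv (.B bar 0 r) + gv (.C bar 2 r) + gv (.S bar r))
      (gv (.Q bar 1 (r+1)) + gv (.B bar 3 r) + gv (.C bar 1 r) + gv (.S bar r))
  | r5 (r : ℕ) : PRel bar (r+1)
      (gv (.Q bar 3 (r+1)) + gv (.B bar 3 r) + gv (.C bar 3 r) + gv (.F bar r))
      (gv (.Q bar 2 (r+1)) + gv (.C bar 2 r) + gv (.S bar r))
  | r6 (r : ℕ) : PRel bar (r+1) (gv (.Q bar 3 (r+1)) + gv (.C bar 3 r) + gv (.S bar r))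
      (gv (.F bar (r+1)))
  | r7 (r : ℕ) (j : Fin 4) : PRel bar (r+1)
      (gv (.Q bar 1 (r+1)) + gv (.B bar 2 r) + gv (.B bar j (r+1)) + gv (.C bar j (r+1))
        + gv (.F bar r))
      (gv (.Q bar 1 (r+1)) + gv (.B bar 1 r) + gv (.C bar j (r+1)) + gv (.F bar r))

/-- Constraint on the counters of a given level and the resulting value `v`; `u` is the value of
the inner state. -/
def PhaseCon (a : Fin 4) (e x p z y u v : ℕ) : Prop :=
  (a = 0 ∧ x + u + y = e ∧ p = 0 ∧ z = 0 ∧ v = e * (x + u)) ∨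
  (a = 1 ∧ x + y + 1 = e ∧ p + u + z = e ∧ v = e * x + p + u) ∨
  (a = 2 ∧ x + y + 1 = e ∧ z + u + p = e ∧ v = e * x + p) ∨
  (a = 3 ∧ x + (y + u) = e ∧ p = 0 ∧ z = 0 ∧ v = e * x)

/-- States of level `m` with value `v`. -/
inductive St : ℕ → ℕ → (NV →₀ ℕ) → Prop
  | S (m : ℕ) : St m (en m) (gv (.S false m))
  | F (m : ℕ) : St m 0 (gv (.F false m))
  | step (m : ℕ) (a : Fin 4) (x p z y u v : ℕ) (σ : NV →₀ ℕ) : St m u σ →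
      PhaseCon a (en m) x p z y u v →
      St (m+1) v (gv (.Q false a (m+1)) + gv (.C false a m) + x • gv (.B false 0 m)
        + p • gv (.B false 1 m) + z • gv (.B false 2 m) + y • gv (.B false 3 m) + σ)

/-- Vanishing of a state outside its range of levels. -/
theorem St.zero {m v : ℕ} {σ : NV →₀ ℕ} (h : St m v σ) :
    (∀ i, m < i → σ (.S false i) = 0) ∧ (∀ i, m < i → σ (.F false i) = 0) ∧
    (∀ j i, m < i → σ (.Q false j i) = 0) ∧ (∀ j i, m ≤ i → σ (.C false j i) = 0) ∧
    (∀ j i, m ≤ i → σ (.B false j i) = 0) ∧ (∀ i, σ (.S true i) = 0) ∧ (∀ i, σ (.F true i) = 0) ∧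
    (∀ j i, σ (.C true j i) = 0) ∧ (∀ j i, σ (.B true j i) = 0) ∧
    σ .s = 0 ∧ σ .l = 0 ∧ σ .c = 0 ∧ σ .cb = 0 ∧ σ .b = 0 ∧ σ .bb = 0 := by
  induction h with
  | S m => simp [Finsupp.single_apply]; intros; omega
  | F m => simp [Finsupp.single_apply]; intros; omega
  | step m a x p z y u v σ h1 h2 ih =>
    obtain ⟨i1, i2, i3, i4, i5, i6, i7, i8, i9, i10, i11, i12, i13, i14, i15⟩ := ih
    refine ⟨?_, ?_, ?_, ?_, ?_, ?_, ?_, ?_, ?_, ?_, ?_, ?_, ?_, ?_, ?_⟩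
    all_goals simp only [Finsupp.add_apply, Finsupp.smul_apply, Finsupp.single_apply, reduceCtorEq,
      if_false, smul_zero, zero_add, NV.Q.injEq, NV.C.injEq, NV.B.injEq, true_and, *]
    · intro i hi; exact i1 i (by omega)
    · intro i hi; exact i2 i (by omega)
    · intro j i hi; rw [i3 j i (by omega), if_neg (by rintro ⟨-, h⟩; omega)]; simp
    · intro j i hi; rw [i4 j i (by omega), if_neg (by rintro ⟨-, h⟩; omega)]; simp
    · intro j i hi
      rw [i5 j i (by omega)]
      rw [if_neg, if_neg, if_neg, if_neg]
      · simp
      all_goals rintro ⟨-, h⟩; omega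
    all_goals simp

theorem St.invS {m v : ℕ} {σ : NV →₀ ℕ} (h : St m v σ) (hs : σ (.S false m) ≠ 0) :
    σ = gv (.S false m) ∧ v = en m := by
  cases h with
  | S m => simp
  | F m => simp at hs
  | step m a x p z y u v σ h1 h2 =>
    have := h1.zero.1 (m+1) (by omega)
    simp [this] at hs

theorem St.invF {m v : ℕ} {σ : NV →₀ ℕ} (h : St m v σ) (hs : σ (.F false m) ≠ 0) :
    σ = gv (.F false m) ∧ v = 0 := by
  cases h with
  | F m => simp
  | S m => simp at hs
  | step m a x p z y u v σ h1 h2 =>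
    have := h1.zero.2.1 (m+1) (by omega)
    simp [this] at hs

/-- The context `ρ` of a state at level `m` with active index `i`. -/
def Ctx (m : ℕ) (i : Fin 4) (ρ : NV →₀ ℕ) : Prop :=
  (∀ i, ρ (.S false i) = 0) ∧ (∀ i, ρ (.F false i) = 0) ∧
  (∀ j i, i ≤ m → ρ (.Q false j i) = 0) ∧ (∀ j i, i ≤ m → ρ (.C false j i) = 0) ∧
  (∀ j i, i < m → ρ (.B false j i) = 0) ∧ ρ (.B false i m) = 0

theorem finish_eq {w α β t t' : NV →₀ ℕ} (heq : t = w + α) (h : t + β = t' + α) :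
    w + β = t' := by
  apply add_right_cancel (b := α)
  rw [add_right_comm, ← heq, h]

/-- Closedness under the relations of the top level, for a state inside a phase. -/
theorem step_closed {m : ℕ} {a : Fin 4} {x p z y u v : ℕ} {σ : NV →₀ ℕ} {i : Fin 4} {k : ℕ}
    {ρ w α β : NV →₀ ℕ} (h1 : St m u σ) (h2 : PhaseCon a (en m) x p z y u v)
    (hρ : Ctx (m+1) i ρ) (hr : PRel false (m+1) α β ∨ PRel false (m+1) β α)
    (heq : (gv (.Q false a (m+1)) + gv (.C false a m) + x • gv (.B false 0 m)
        + p • gv (.B false 1 m) + z • gv (.B false 2 m) + y • gv (.B false 3 m) + σ)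
        + gv (.C false i (m+1)) + k • gv (.B false i (m+1)) + ρ = w + α) :
    ∃ σ' v' k', St (m+1) v' σ' ∧ k' + v' = k + v ∧
      w + β = σ' + gv (.C false i (m+1)) + k' • gv (.B false i (m+1)) + ρ := by
  obtain ⟨z1, z2, z3, z4, z5, -⟩ := h1.zero
  obtain ⟨y1, y2, y3, y4, y5, y6⟩ := hρ
  have ev : ∀ t, α t ≤ ((gv (.Q false a (m+1)) + gv (.C false a m) + x • gv (.B false 0 m)
        + p • gv (.B false 1 m) + z • gv (.B false 2 m) + y • gv (.B false 3 m) + σ)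
        + gv (.C false i (m+1)) + k • gv (.B false i (m+1)) + ρ) t := by
    intro t; rw [heq]; simp
  have eS1 : α (.S false (m+1)) = 0 := by
    simpa [z1 (m+1), y1] using ev (.S false (m+1))
  have eF1 : α (.F false (m+1)) = 0 := by
    simpa [z2 (m+1), y2] using ev (.F false (m+1))
  have eQ : ∀ j, α (.Q false j (m+1)) ≠ 0 → a = j := by
    intro j hj
    have := ev (.Q false j (m+1))
    by_contra hne
    simp [Finsupp.single_apply, hne, z3 j (m+1), y3 j (m+1)] at this
    exact hj this
  have eC : ∀ j, α (.C false j (m+1)) ≠ 0 → i = j := by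
    intro j hj
    have := ev (.C false j (m+1))
    by_contra hne
    simp [Finsupp.single_apply, hne, z4 j (m+1), y4 j (m+1)] at this
    exact hj this
  have eS : α (.S false m) ≠ 0 → σ = gv (.S false m) ∧ u = en m := by
    intro hj
    apply h1.invS
    intro h0
    have := ev (.S false m)
    simp [h0, y1 m] at this
    exact hj this
  have eF : α (.F false m) ≠ 0 → σ = gv (.F false m) ∧ u = 0 := by
    intro hj
    apply h1.invF
    intro h0
    have := ev (.F false m)
    simp [h0, y2 m] at this
    exact hj this
  have e0 : α (.B false 0 m) ≤ x := by
    simpa [Finsupp.single_apply, z5 0 m, y5 0 m] using ev (.B false 0 m)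
  have e1 : α (.B false 1 m) ≤ p := by
    simpa [Finsupp.single_apply, z5 1 m, y5 1 m] using ev (.B false 1 m)
  have e2 : α (.B false 2 m) ≤ z := by
    simpa [Finsupp.single_apply, z5 2 m, y5 2 m] using ev (.B false 2 m)
  have e3 : α (.B false 3 m) ≤ y := by
    simpa [Finsupp.single_apply, z5 3 m, y5 3 m] using ev (.B false 3 m)
  have eB : α (.B false i (m+1)) ≤ k := by
    simpa [Finsupp.single_apply, z5 i (m+1), y6] using ev (.B false i (m+1))
  have he := en_succ m
  have hep := en_pos m
  clear ev z1 z2 z3 z4 z5 y1 y2 y3 y4 y5 y6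
  unfold PhaseCon at h2
  rcases hr with hr | hr
  · cases hr with
    | r1 =>
      obtain rfl := eQ 0 (by simp)
      obtain ⟨rfl, rfl⟩ := eS (by simp)
      simp at h2
      obtain ⟨h3, rfl, rfl, rfl⟩ := h2
      obtain rfl : x = 0 := by omega
      obtain rfl : y = 0 := by omega
      refine ⟨_, _, k, St.S (m+1), by rw [he]; simp, finish_eq heq ?_⟩
      module
    | r2 =>
      obtain rfl := eQ 1 (by simp)
      obtain ⟨rfl, rfl⟩ := eS (by simp)
      simp at h2
      obtain ⟨h3, h4, rfl⟩ := h2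
      obtain rfl : p = 0 := by omega
      obtain rfl : z = 0 := by omega
      refine ⟨_, _, k, St.step m 0 (x+1) 0 0 y 0 (en m * (x + 1)) _ (St.F m) ?_, by ring,
        finish_eq heq ?_⟩
      · simp [PhaseCon]; omega
      module
    | r3 =>
      obtain rfl := eQ 2 (by simp)
      obtain ⟨rfl, rfl⟩ := eF (by simp)
      simp at h2
      obtain ⟨h3, h4, rfl⟩ := h2
      refine ⟨_, _, k, St.step m 1 x p z y 0 (en m * x + p) _ (St.F m) ?_, by ring,
        finish_eq heq ?_⟩
      · simp [PhaseCon]; omega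
      module
    | r4 =>
      obtain rfl := eQ 2 (by simp)
      obtain ⟨rfl, rfl⟩ := eS (by simp)
      simp at h2
      obtain ⟨h3, h4, rfl⟩ := h2
      simp [Finsupp.single_apply] at e0
      obtain ⟨x, rfl⟩ : ∃ x', x = x' + 1 := ⟨x - 1, by omega⟩
      obtain rfl : p = 0 := by omega
      obtain rfl : z = 0 := by omega
      refine ⟨_, _, k, St.step m 1 x 0 0 (y+1) (en m) (en m * x + 0 + en m) _ (St.S m) ?_, by ring,
        finish_eq heq ?_⟩
      · simp [PhaseCon]; omega
      module
    | r5 =>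
      obtain rfl := eQ 3 (by simp)
      obtain ⟨rfl, rfl⟩ := eF (by simp)
      simp at h2
      obtain ⟨h3, rfl, rfl, rfl⟩ := h2
      simp [Finsupp.single_apply] at e3
      obtain ⟨y, rfl⟩ : ∃ x', y = x' + 1 := ⟨y - 1, by omega⟩
      refine ⟨_, _, k, St.step m 2 x 0 0 y (en m) (en m * x) _ (St.S m) ?_, by ring,
        finish_eq heq ?_⟩
      · simp [PhaseCon]; omega
      module
    | r6 =>
      obtain rfl := eQ 3 (by simp)
      obtain ⟨rfl, rfl⟩ := eS (by simp)
      simp at h2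
      obtain ⟨h3, rfl, rfl, rfl⟩ := h2
      obtain rfl : x = 0 := by omega
      obtain rfl : y = 0 := by omega
      refine ⟨_, _, k, St.F (m+1), by simp, finish_eq heq ?_⟩
      module
    | r7 r j =>
      obtain rfl := eQ 1 (by simp)
      obtain ⟨rfl, rfl⟩ := eF (by simp)
      obtain rfl := eC j (by simp)
      simp at h2
      obtain ⟨h3, h4, rfl⟩ := h2
      simp [Finsupp.single_apply] at e2 eB
      obtain ⟨z, rfl⟩ : ∃ x', z = x' + 1 := ⟨z - 1, by omega⟩
      obtain ⟨k, rfl⟩ : ∃ x', k = x' + 1 := ⟨k - 1, by omega⟩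
      refine ⟨_, _, k, St.step m 1 x (p+1) z y 0 (en m * x + (p+1)) _ (St.F m) ?_, by ring,
        finish_eq heq ?_⟩
      · simp [PhaseCon]; omega
      module
  · cases hr with
    | r1 => simp at eS1
    | r6 => simp at eF1
    | r2 =>
      obtain rfl := eQ 0 (by simp)
      obtain ⟨rfl, rfl⟩ := eF (by simp)
      simp at h2
      obtain ⟨h3, rfl, rfl, rfl⟩ := h2
      simp [Finsupp.single_apply] at e0
      obtain ⟨x, rfl⟩ : ∃ x', x = x' + 1 := ⟨x - 1, by omega⟩
      refine ⟨_, _, k, St.step m 1 x 0 0 y (en m) (en m * x + 0 + en m) _ (St.S m) ?_, by ring,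
        finish_eq heq ?_⟩
      · simp [PhaseCon]; omega
      module
    | r3 =>
      obtain rfl := eQ 1 (by simp)
      obtain ⟨rfl, rfl⟩ := eF (by simp)
      simp at h2
      obtain ⟨h3, h4, rfl⟩ := h2
      refine ⟨_, _, k, St.step m 2 x p z y 0 (en m * x + p) _ (St.F m) ?_, by ring,
        finish_eq heq ?_⟩
      · simp [PhaseCon]; omega
      module
    | r4 =>
      obtain rfl := eQ 1 (by simp)
      obtain ⟨rfl, rfl⟩ := eS (by simp)
      simp at h2
      obtain ⟨h3, h4, rfl⟩ := h2
      simp [Finsupp.single_apply] at e3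
      obtain ⟨y, rfl⟩ : ∃ x', y = x' + 1 := ⟨y - 1, by omega⟩
      obtain rfl : p = 0 := by omega
      obtain rfl : z = 0 := by omega
      refine ⟨_, _, k, St.step m 2 (x+1) 0 0 y (en m) (en m * (x+1)) _ (St.S m) ?_, by ring,
        finish_eq heq ?_⟩
      · simp [PhaseCon]; omega
      module
    | r5 =>
      obtain rfl := eQ 2 (by simp)
      obtain ⟨rfl, rfl⟩ := eS (by simp)
      simp at h2
      obtain ⟨h3, h4, rfl⟩ := h2
      obtain rfl : p = 0 := by omega
      obtain rfl : z = 0 := by omega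
      refine ⟨_, _, k, St.step m 3 x 0 0 (y+1) 0 (en m * x) _ (St.F m) ?_, by ring,
        finish_eq heq ?_⟩
      · simp [PhaseCon]; omega
      module
    | r7 r j =>
      obtain rfl := eQ 1 (by simp)
      obtain ⟨rfl, rfl⟩ := eF (by simp)
      obtain rfl := eC j (by simp)
      simp at h2
      obtain ⟨h3, h4, rfl⟩ := h2
      simp [Finsupp.single_apply] at e1
      obtain ⟨p, rfl⟩ : ∃ x', p = x' + 1 := ⟨p - 1, by omega⟩
      refine ⟨_, _, k + 1, St.step m 1 x p (z+1) y 0 (en m * x + p) _ (St.F m) ?_, by ring,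
        finish_eq heq ?_⟩
      · simp [PhaseCon]; omega
      module

/-- Every side of a relation carries a token of level at most that of the relation. -/
theorem PRel.token {bar : Bool} {j : ℕ} {α β : NV →₀ ℕ} (h : PRel bar j α β) :
    ((∃ i ≤ j, α (.S bar i) ≠ 0) ∨ (∃ i ≤ j, α (.F bar i) ≠ 0)) ∧
    ((∃ i ≤ j, β (.S bar i) ≠ 0) ∨ (∃ i ≤ j, β (.F bar i) ≠ 0)) := by
  cases h with
  | p0 j => exact ⟨Or.inr ⟨0, by simp⟩, Or.inl ⟨0, by simp⟩⟩
  | r1 r => exact ⟨Or.inl ⟨r, by simp⟩, Or.inl ⟨r+1, by simp⟩⟩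
  | r2 r => exact ⟨Or.inl ⟨r, by simp⟩, Or.inr ⟨r, by simp⟩⟩
  | r3 r => exact ⟨Or.inr ⟨r, by simp⟩, Or.inr ⟨r, by simp⟩⟩
  | r4 r => exact ⟨Or.inl ⟨r, by simp⟩, Or.inl ⟨r, by simp⟩⟩
  | r5 r => exact ⟨Or.inr ⟨r, by simp⟩, Or.inl ⟨r, by simp⟩⟩
  | r6 r => exact ⟨Or.inl ⟨r, by simp⟩, Or.inr ⟨r+1, by simp⟩⟩
  | r7 r j => exact ⟨Or.inr ⟨r, by simp⟩, Or.inr ⟨r, by simp⟩⟩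

theorem closed {m v : ℕ} {σ : NV →₀ ℕ} (h : St m v σ) :
    ∀ {i : Fin 4} {k j : ℕ} {ρ w α β : NV →₀ ℕ}, j ≤ m → Ctx m i ρ →
    (PRel false j α β ∨ PRel false j β α) →
    σ + gv (.C false i m) + k • gv (.B false i m) + ρ = w + α →
    ∃ σ' v' k', St m v' σ' ∧ k' + v' = k + v ∧
      w + β = σ' + gv (.C false i m) + k' • gv (.B false i m) + ρ := by
  induction h with
  | S m =>
    intro i k j ρ w α β hj hρ hr heq
    obtain ⟨y1, y2, y3, y4, y5, y6⟩ := hρ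
    have ev : ∀ t, α t ≤ (gv (.S false m) + gv (.C false i m) + k • gv (.B false i m) + ρ) t := by
      intro t; rw [heq]; simp
    have eF : ∀ r, α (.F false r) = 0 := by
      intro r; simpa [y2] using ev (.F false r)
    have eS : ∀ r, r ≠ m → α (.S false r) = 0 := by
      intro r hr; simpa [y1, Finsupp.single_apply, hr.symm] using ev (.S false r)
    rcases hr with hr | hr
    · cases hr with
      | p0 j => have := eF 0; simp at this
      | r1 r => have := eS r (by omega); simp at this
      | r2 r => have := eS r (by omega); simp at this
      | r3 r => have := eF r; simp at this
      | r4 r => have := eS r (by omega); simp at this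
      | r5 r => have := eF r; simp at this
      | r6 r => have := eS r (by omega); simp at this
      | r7 r j => have := eF r; simp at this
    · cases hr with
      | p0 j =>
        obtain rfl : m = 0 := by
          by_contra h0
          have := eS 0 (by omega); simp at this
        obtain rfl : i = j := by
          have := ev (.C false j 0)
          by_contra hne
          simp [Finsupp.single_apply, hne, y4 j 0] at this
        exact ⟨_, _, k+2, St.F 0, by simp [en], finish_eq heq (by module)⟩
      | r1 r =>
        obtain rfl : m = r + 1 := by
          by_contra h0
          have := eS (r+1) (by omega); simp at this
        refine ⟨_, _, k, St.step r 0 0 0 0 0 (en r) (en r * en r) _ (St.S r) ?_, ?_,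
          finish_eq heq (by module)⟩
        · simp [PhaseCon]
        · rw [en_succ]
      | r2 r => have := eF r; simp at this
      | r3 r => have := eF r; simp at this
      | r4 r => have := eS r (by omega); simp at this
      | r5 r => have := eS r (by omega); simp at this
      | r6 r => have := eF (r+1); simp at this
      | r7 r j => have := eF r; simp at this
  | F m =>
    intro i k j ρ w α β hj hρ hr heq
    obtain ⟨y1, y2, y3, y4, y5, y6⟩ := hρ
    have ev : ∀ t, α t ≤ (gv (.F false m) + gv (.C false i m) + k • gv (.B false i m) + ρ) t := by
      intro t; rw [heq]; simp
    have eS : ∀ r, α (.S false r) = 0 := by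
      intro r; simpa [y1] using ev (.S false r)
    have eF : ∀ r, r ≠ m → α (.F false r) = 0 := by
      intro r hr; simpa [y2, Finsupp.single_apply, hr.symm] using ev (.F false r)
    rcases hr with hr | hr
    · cases hr with
      | p0 j =>
        obtain rfl : m = 0 := by
          by_contra h0
          have := eF 0 (by omega); simp at this
        obtain rfl : i = j := by
          have := ev (.C false j 0)
          by_contra hne
          simp [Finsupp.single_apply, hne, y4 j 0] at this
        have := ev (.B false i 0)
        simp [y6] at this
        obtain ⟨k, rfl⟩ : ∃ x', k = x' + 2 := ⟨k - 2, by omega⟩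
        exact ⟨_, _, k, St.S 0, by simp [en], finish_eq heq (by module)⟩
      | r1 r => have := eS r; simp at this
      | r2 r => have := eS r; simp at this
      | r3 r => have := eF r (by omega); simp at this
      | r4 r => have := eS r; simp at this
      | r5 r => have := eF r (by omega); simp at this
      | r6 r => have := eS r; simp at this
      | r7 r j => have := eF r (by omega); simp at this
    · cases hr with
      | p0 j => have := eS 0; simp at this
      | r1 r => have := eS (r+1); simp at this
      | r2 r => have := eF r (by omega); simp at this
      | r3 r => have := eF r (by omega); simp at this
      | r4 r => have := eS r; simp at this
      | r5 r => have := eS r; simp at this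
      | r6 r =>
        obtain rfl : m = r + 1 := by
          by_contra h0
          have := eF (r+1) (by omega); simp at this
        refine ⟨_, _, k, St.step r 3 0 0 0 0 (en r) 0 _ (St.S r) ?_, rfl,
          finish_eq heq (by module)⟩
        simp [PhaseCon]
      | r7 r j => have := eF r (by omega); simp at this
  | step m a x p z y u v σ h1 h2 ih =>
    intro i k j ρ w α β hj hρ hr heq
    rcases Nat.lt_or_ge m j with hlt | hle
    · obtain rfl : j = m + 1 := by omega
      exact step_closed h1 h2 hρ hr heq
    · obtain ⟨y1, y2, y3, y4, y5, y6⟩ := hρ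
      have hC : ∀ a' : Fin 4, ∀ x' p' z' y' : ℕ, (x' • gv (.B false 0 m) + p' • gv (.B false 1 m)
          + z' • gv (.B false 2 m) + y' • gv (.B false 3 m)) (.B false a' m) = 0 →
          Ctx m a' (gv (.Q false a (m+1)) + (x' • gv (.B false 0 m) + p' • gv (.B false 1 m)
          + z' • gv (.B false 2 m) + y' • gv (.B false 3 m)) + gv (.C false i (m+1))
          + k • gv (.B false i (m+1)) + ρ) := by
        intro a' x' p' z' y' h0
        refine ⟨?_, ?_, ?_, ?_, ?_, ?_⟩
        · intro t; simp [y1]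
        · intro t; simp [y2]
        · intro t t' ht
          have : m + 1 ≠ t' := by omega
          simp [y3 t t' (by omega), this, Finsupp.single_apply]
        · intro t t' ht
          have : m + 1 ≠ t' := by omega
          simp [y4 t t' (by omega), this, Finsupp.single_apply]
        · intro t t' ht
          have h3 : m + 1 ≠ t' := by omega
          have h4 : m ≠ t' := by omega
          simp [y5 t t' (by omega), h3, h4, Finsupp.single_apply]
        · rw [Finsupp.add_apply, Finsupp.add_apply, Finsupp.add_apply, Finsupp.add_apply, h0]
          simp [y5 a' m (by omega), Finsupp.single_apply]
      have h2' := h2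
      unfold PhaseCon at h2'
      rcases h2' with ⟨rfl, h3⟩ | ⟨rfl, h3⟩ | ⟨rfl, h3⟩ | ⟨rfl, h3⟩
      · obtain ⟨σ', v', k', s1, s2, s3⟩ := ih (k := x) (w := w) hle
          (hC 0 0 p z y (by simp [Finsupp.single_apply])) hr (by rw [← heq]; module)
        refine ⟨_, _, k, St.step m 0 k' p z y v' v σ' s1 ?_, rfl, ?_⟩
        · rw [← s2] at h3
          simpa [PhaseCon] using h3
        · rw [s3]; module
      · obtain ⟨σ', v', k', s1, s2, s3⟩ := ih (k := p) (w := w) hle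
          (hC 1 x 0 z y (by simp [Finsupp.single_apply])) hr (by rw [← heq]; module)
        refine ⟨_, _, k, St.step m 1 x k' z y v' v σ' s1 ?_, rfl, ?_⟩
        · simp [PhaseCon]; omega
        · rw [s3]; module
      · obtain ⟨σ', v', k', s1, s2, s3⟩ := ih (k := z) (w := w) hle
          (hC 2 x p 0 y (by simp [Finsupp.single_apply])) hr (by rw [← heq]; module)
        refine ⟨_, _, k, St.step m 2 x p k' y v' v σ' s1 ?_, rfl, ?_⟩
        · simp [PhaseCon]; omega
        · rw [s3]; module
      · obtain ⟨σ', v', k', s1, s2, s3⟩ := ih (k := y) (w := w) hle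
          (hC 3 x p z 0 (by simp [Finsupp.single_apply])) hr (by rw [← heq]; module)
        refine ⟨_, _, k, St.step m 3 x p z k' v' v σ' s1 ?_, rfl, ?_⟩
        · simp [PhaseCon]; omega
        · rw [s3]; module

/-- The seven extra relations. -/
inductive GRel (n : ℕ) : (NV →₀ ℕ) → (NV →₀ ℕ) → Prop
  | g1 : GRel n (gv (.B false 3 n) + gv .l + gv .b) (gv .l + gv .c)
  | g2 : GRel n (gv (.B false 3 n) + gv .l + gv .bb) (gv .l + gv .cb)
  | g3 : GRel n (gv (.C false 3 n) + gv (.F false n)) (gv .l)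
  | g4 : GRel n (gv (.C true 3 n) + gv (.F true n)) (gv (.C false 3 n) + gv (.S false n))
  | g5 : GRel n (gv (.B true 3 n) + gv (.C false 3 n) + gv (.S false n))
      (gv (.C false 3 n) + gv (.S false n) + gv .b)
  | g6 : GRel n (gv (.B true 3 n) + gv (.C false 3 n) + gv (.S false n))
      (gv (.C false 3 n) + gv (.S false n) + gv .bb)
  | g7 : GRel n (gv (.C true 3 n) + gv (.S true n)) (gv .s)

/-- All relations. -/
inductive NRel (n : ℕ) (α β : NV →₀ ℕ) : Prop
  | p (bar : Bool) (j : ℕ) (hj : j ≤ n) (h : PRel bar j α β) : NRel n α β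
  | g (h : GRel n α β) : NRel n α β

/-- The part of a monomial consisting of the variables `c, b, c̄, b̄`. -/
noncomputable def smallPart (a1 a2 b1 b2 : ℕ) : NV →₀ ℕ :=
  a1 • gv .c + a2 • gv .b + b1 • gv .cb + b2 • gv .bb

/-- A set of monomials containing `ℓ c^a c̄^b` and closed under the relations
(if `a + b < e(n)`). -/
def AA (n a b : ℕ) (t : NV →₀ ℕ) : Prop :=
  ∃ a1 a2 b1 b2, a1 + a2 = a ∧ b1 + b2 = b ∧
    (t = gv .l + (a2 + b2) • gv (.B false 3 n) + smallPart a1 a2 b1 b2 ∨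
     ∃ σ v k, St n v σ ∧ k + v = a2 + b2 ∧
      t = σ + gv (.C false 3 n) + k • gv (.B false 3 n) + smallPart a1 a2 b1 b2)

theorem AA_closed {n a b : ℕ} (hab : a + b < en n) {w α β : NV →₀ ℕ}
    (hrel : NRel n α β ∨ NRel n β α) (h : AA n a b (w + α)) : AA n a b (w + β) := by
  obtain ⟨a1, a2, b1, b2, ha, hb, h | ⟨σ, v, k, hσ, hk, h⟩⟩ := h
  · have ev : ∀ t, α t ≤
        (gv .l + (a2 + b2) • gv (.B false 3 n) + smallPart a1 a2 b1 b2) t := by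
      intro t; rw [← h]; simp
    have eS : ∀ bar i, α (.S bar i) = 0 := by
      intro bar i; simpa [smallPart] using ev (.S bar i)
    have eF : ∀ bar i, α (.F bar i) = 0 := by
      intro bar i; simpa [smallPart] using ev (.F bar i)
    have es : α .s = 0 := by simpa [smallPart] using ev .s
    have ec : α .c ≤ a1 := by simpa [smallPart] using ev .c
    have eb : α .b ≤ a2 := by simpa [smallPart] using ev .b
    have ecb : α .cb ≤ b1 := by simpa [smallPart] using ev .cb
    have ebb : α .bb ≤ b2 := by simpa [smallPart] using ev .bb
    clear ev
    rcases hrel with hr | hr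
    · cases hr with
      | p bar j hj hr =>
        exfalso
        rcases hr.token.1 with ⟨i, -, hi⟩ | ⟨i, -, hi⟩
        · exact hi (eS _ _)
        · exact hi (eF _ _)
      | g hr =>
        cases hr with
        | g1 =>
          simp at eb
          obtain ⟨a2, rfl⟩ : ∃ x', a2 = x' + 1 := ⟨a2 - 1, by omega⟩
          refine ⟨a1 + 1, a2, b1, b2, by omega, by omega, Or.inl (finish_eq h.symm ?_)⟩
          unfold smallPart; module
        | g2 =>
          simp at ebb
          obtain ⟨b2, rfl⟩ : ∃ x', b2 = x' + 1 := ⟨b2 - 1, by omega⟩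
          refine ⟨a1, a2, b1 + 1, b2, by omega, by omega, Or.inl (finish_eq h.symm ?_)⟩
          unfold smallPart; module
        | g3 => have := eF false n; simp at this
        | g4 => have := eF true n; simp at this
        | g5 => have := eS false n; simp at this
        | g6 => have := eS false n; simp at this
        | g7 => have := eS true n; simp at this
    · cases hr with
      | p bar j hj hr =>
        exfalso
        rcases hr.token.2 with ⟨i, -, hi⟩ | ⟨i, -, hi⟩
        · exact hi (eS _ _)
        · exact hi (eF _ _)
      | g hr =>
        cases hr with
        | g1 =>
          simp at ec
          obtain ⟨a1, rfl⟩ : ∃ x', a1 = x' + 1 := ⟨a1 - 1, by omega⟩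
          refine ⟨a1, a2 + 1, b1, b2, by omega, by omega, Or.inl (finish_eq h.symm ?_)⟩
          unfold smallPart; module
        | g2 =>
          simp at ecb
          obtain ⟨b1, rfl⟩ : ∃ x', b1 = x' + 1 := ⟨b1 - 1, by omega⟩
          refine ⟨a1, a2, b1, b2 + 1, by omega, by omega, Or.inl (finish_eq h.symm ?_)⟩
          unfold smallPart; module
        | g3 =>
          refine ⟨a1, a2, b1, b2, by omega, by omega,
            Or.inr ⟨_, _, a2 + b2, St.F n, rfl, finish_eq h.symm ?_⟩⟩
          unfold smallPart; module
        | g4 => have := eS false n; simp at this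
        | g5 => have := eS false n; simp at this
        | g6 => have := eS false n; simp at this
        | g7 => simp at es
  · obtain ⟨z1, z2, z3, z4, z5, z6, z7, z8, z9, z10, z11, z12, z13, z14, z15⟩ := hσ.zero
    have ev : ∀ t, α t ≤
        (σ + gv (.C false 3 n) + k • gv (.B false 3 n) + smallPart a1 a2 b1 b2) t := by
      intro t; rw [← h]; simp
    have eS : ∀ i, α (.S true i) = 0 := by
      intro i; simpa [smallPart, z6] using ev (.S true i)
    have eF : ∀ i, α (.F true i) = 0 := by
      intro i; simpa [smallPart, z7] using ev (.F true i)
    have el : α .l = 0 := by simpa [smallPart, z11] using ev .l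
    have es : α .s = 0 := by simpa [smallPart, z10] using ev .s
    have eSn : α (.S false n) = 0 := by
      by_contra h0
      have h1 : α (.S false n) ≤ σ (.S false n) := by simpa [smallPart] using ev (.S false n)
      obtain ⟨-, h3⟩ := hσ.invS (by omega)
      omega
    have eFn : α (.F false n) ≠ 0 → σ = gv (.F false n) ∧ v = 0 := by
      intro h0
      have h1 : α (.F false n) ≤ σ (.F false n) := by simpa [smallPart] using ev (.F false n)
      exact hσ.invF (by omega)
    have hctx : Ctx n 3 (smallPart a1 a2 b1 b2) := by
      refine ⟨?_, ?_, ?_, ?_, ?_, ?_⟩ <;> intros <;> simp [smallPart]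
    have hP : ∀ j, j ≤ n → (PRel false j α β ∨ PRel false j β α) → AA n a b (w + β) := by
      intro j hj hr
      obtain ⟨σ', v', k', s1, s2, s3⟩ := closed hσ hj hctx hr h.symm
      exact ⟨a1, a2, b1, b2, ha, hb, Or.inr ⟨σ', v', k', s1, by omega, s3⟩⟩
    rcases hrel with hr | hr
    · cases hr with
      | p bar j hj hr =>
        cases bar
        · exact hP j hj (Or.inl hr)
        · exfalso
          rcases hr.token.1 with ⟨i, -, hi⟩ | ⟨i, -, hi⟩
          · exact hi (eS _)
          · exact hi (eF _)
      | g hr =>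
        cases hr with
        | g1 => simp at el
        | g2 => simp at el
        | g3 =>
          obtain ⟨rfl, rfl⟩ := eFn (by simp)
          obtain rfl : k = a2 + b2 := by omega
          exact ⟨a1, a2, b1, b2, ha, hb, Or.inl (finish_eq h.symm (by module))⟩
        | g4 => have := eF n; simp at this
        | g5 => simp at eSn
        | g6 => simp at eSn
        | g7 => have := eS n; simp at this
    · cases hr with
      | p bar j hj hr =>
        cases bar
        · exact hP j hj (Or.inr hr)
        · exfalso
          rcases hr.token.2 with ⟨i, -, hi⟩ | ⟨i, -, hi⟩
          · exact hi (eS _)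
          · exact hi (eF _)
      | g hr =>
        cases hr with
        | g1 => simp at el
        | g2 => simp at el
        | g3 => simp at el
        | g4 => simp at eSn
        | g5 => simp at eSn
        | g6 => simp at eSn
        | g7 => simp at es

/-- No side of a relation is a monomial in `c, c̄` only. -/
theorem NRel.ne {n : ℕ} {α β : NV →₀ ℕ} (h : NRel n α β) :
    (∃ x, x ≠ .c ∧ x ≠ .cb ∧ α x ≠ 0) ∧ (∃ x, x ≠ .c ∧ x ≠ .cb ∧ β x ≠ 0) := by
  cases h with
  | p bar j hj h =>
    constructor
    · rcases h.token.1 with ⟨i, -, hi⟩ | ⟨i, -, hi⟩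
      · exact ⟨_, by simp, by simp, hi⟩
      · exact ⟨_, by simp, by simp, hi⟩
    · rcases h.token.2 with ⟨i, -, hi⟩ | ⟨i, -, hi⟩
      · exact ⟨_, by simp, by simp, hi⟩
      · exact ⟨_, by simp, by simp, hi⟩
  | g h =>
    cases h with
    | g1 => exact ⟨⟨.l, by simp⟩, ⟨.l, by simp⟩⟩
    | g2 => exact ⟨⟨.l, by simp⟩, ⟨.l, by simp⟩⟩
    | g3 => exact ⟨⟨.F false n, by simp⟩, ⟨.l, by simp⟩⟩
    | g4 => exact ⟨⟨.F true n, by simp⟩, ⟨.S false n, by simp⟩⟩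
    | g5 => exact ⟨⟨.S false n, by simp⟩, ⟨.S false n, by simp⟩⟩
    | g6 => exact ⟨⟨.S false n, by simp⟩, ⟨.S false n, by simp⟩⟩
    | g7 => exact ⟨⟨.S true n, by simp⟩, ⟨.s, by simp⟩⟩

/-! ### Transfer to the polynomial ring -/

/-- Embedding of the variables. -/
def toNV {n : ℕ} : MVar n → NV
  | .vs => .s
  | .vl => .l
  | .vc => .c
  | .vcb => .cb
  | .vb => .b
  | .vbb => .bb
  | .vS bar i => .S bar i
  | .vF bar i => .F bar i
  | .vQ bar j i => .Q bar j i
  | .vC bar j i => .C bar j i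
  | .vB bar j i => .B bar j i

theorem toNV_injective {n : ℕ} : Function.Injective (toNV (n := n)) := by
  intro x y h
  cases x <;> cases y <;> simp_all [toNV, Fin.ext_iff]

theorem FF_rel {n : ℕ} {p : MPoly n} (hp : p ∈ FF n) :
    ∃ α β : Mon (MVar n), p = monomial α 1 + monomial β 1 ∧
      NRel n (Finsupp.mapDomain toNV α) (Finsupp.mapDomain toNV β) := by
  have hPP : ∀ bar, p ∈ PP n bar → ∃ α β : Mon (MVar n), p = monomial α 1 + monomial β 1 ∧
      NRel n (Finsupp.mapDomain toNV α) (Finsupp.mapDomain toNV β) := by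
    intro bar hp
    rcases hp with ⟨j, rfl⟩ | hp
    · refine ⟨_, _, by simp only [X, monomial_mul, monomial_pow, mul_one, one_pow]; rfl,
        NRel.p bar 0 (by omega) ?_⟩
      simp only [Finsupp.mapDomain_add, Finsupp.mapDomain_smul, Finsupp.mapDomain_single, toNV]
      exact PRel.p0 j
    · obtain ⟨i, hp⟩ := Set.mem_iUnion.1 hp
      rcases hp with hp | ⟨j, rfl⟩
      · simp only [Set.mem_insert_iff, Set.mem_singleton_iff] at hp
        rcases hp with rfl | rfl | rfl | rfl | rfl | rfl
        all_goals
          refine ⟨_, _, by simp only [X, monomial_mul, mul_one]; rfl,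
            NRel.p bar (i+1) (by omega) ?_⟩
          simp only [Finsupp.mapDomain_add, Finsupp.mapDomain_single, toNV]
        · exact PRel.r1 i
        · exact PRel.r2 i
        · exact PRel.r3 i
        · exact PRel.r4 i
        · exact PRel.r5 i
        · exact PRel.r6 i
      · refine ⟨_, _, by simp only [X, monomial_mul, mul_one]; rfl,
            NRel.p bar (i+1) (by omega) ?_⟩
        simp only [Finsupp.mapDomain_add, Finsupp.mapDomain_single, toNV]
        exact PRel.r7 i j
  rcases hp with (hp | hp) | hp
  · exact hPP _ hp
  · exact hPP _ hp
  · simp only [GG, Set.mem_insert_iff, Set.mem_singleton_iff] at hp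
    rcases hp with rfl | rfl | rfl | rfl | rfl | rfl | rfl
    all_goals
      refine ⟨_, _, by simp only [X, monomial_mul, mul_one]; rfl, NRel.g ?_⟩
      simp only [Finsupp.mapDomain_add, Finsupp.mapDomain_single, toNV]
    · exact GRel.g1
    · exact GRel.g2
    · exact GRel.g3
    · exact GRel.g4
    · exact GRel.g5
    · exact GRel.g6
    · exact GRel.g7

open Classical in
/-- The functional summing the coefficients over the set `Φ` of monomials. -/
noncomputable def sumOver {n : ℕ} (Φ : Mon (MVar n) → Prop) : MPoly n →ₗ[ZMod 2] ZMod 2 :=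
  (basisMonomials (MVar n) (ZMod 2)).constr (ZMod 2) (fun u => if Φ u then 1 else 0)

open Classical in
theorem sumOver_monomial {n : ℕ} (Φ : Mon (MVar n) → Prop) (u : Mon (MVar n)) :
    sumOver Φ (monomial u 1) = if Φ u then 1 else 0 := by
  have := (basisMonomials (MVar n) (ZMod 2)).constr_basis (ZMod 2)
    (fun u => if Φ u then (1 : ZMod 2) else 0) u
  rwa [coe_basisMonomials] at this

open Classical in
theorem sumOver_apply {n : ℕ} (Φ : Mon (MVar n) → Prop) (p : MPoly n) :
    sumOver Φ p = ∑ u ∈ p.support, coeff u p * if Φ u then 1 else 0 := by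
  conv_lhs => rw [p.as_sum]
  rw [map_sum]
  refine Finset.sum_congr rfl fun u _ => ?_
  have : monomial u (coeff u p) = coeff u p • (monomial u 1 : MPoly n) := by
    rw [smul_monomial, smul_eq_mul, mul_one]
  rw [this, map_smul, sumOver_monomial, smul_eq_mul]

theorem sumOver_ideal {n : ℕ} (Φ : Mon (MVar n) → Prop)
    (hΦ : ∀ α β : Mon (MVar n), NRel n (Finsupp.mapDomain toNV α) (Finsupp.mapDomain toNV β) →
      ∀ u, Φ (u + α) ↔ Φ (u + β))
    {p : MPoly n} (hp : p ∈ Ideal.span (FF n)) : sumOver Φ p = 0 := by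
  have key : ∀ q : MPoly n, sumOver Φ (q * p) = 0 := by
    induction hp using Submodule.span_induction with
    | mem p hp =>
      obtain ⟨α, β, rfl, hr⟩ := FF_rel hp
      intro q
      induction q using MvPolynomial.induction_on' with
      | monomial u a =>
        have : (monomial u a : MPoly n) * (monomial α 1 + monomial β 1)
            = a • ((monomial (u + α) 1 : MPoly n) + monomial (u + β) 1) := by
          simp [mul_add, monomial_mul, smul_monomial]
        rw [this, map_smul, map_add, sumOver_monomial, sumOver_monomial]
        have hiff := hΦ α β hr u
        by_cases h : Φ (u + β)
        · rw [if_pos h, if_pos (hiff.2 h), CharTwo.add_self_eq_zero, smul_zero]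
        · rw [if_neg h, if_neg (fun h' => h (hiff.1 h')), add_zero, smul_zero]
      | add a b iha ihb => rw [add_mul, map_add, iha, ihb, add_zero]
    | zero => simp
    | add x y _ _ hx hy => intro q; rw [mul_add, map_add, hx, hy, add_zero]
    | smul a x _ hx => intro q; rw [smul_eq_mul, ← mul_assoc]; exact hx _
  simpa using key 1

theorem no_head {n : ℕ} (r : Mon (MVar n) → Mon (MVar n) → Prop) (Φ : Mon (MVar n) → Prop)
    (hΦ : ∀ α β : Mon (MVar n), NRel n (Finsupp.mapDomain toNV α) (Finsupp.mapDomain toNV β) →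
      ∀ u, Φ (u + α) ↔ Φ (u + β))
    (t : Mon (MVar n)) (ht : Φ t) (hmin : ∀ u, Φ u → r u t → u = t)
    {p : MPoly n} (hp : p ∈ Ideal.span (FF n)) (hh : IsHT r p t) : False := by
  classical
  have h0 := sumOver_ideal Φ hΦ hp
  rw [sumOver_apply, Finset.sum_eq_single t] at h0
  · rw [if_pos ht, mul_one] at h0
    exact (mem_support_iff.1 hh.1) h0
  · intro u hu hne
    rw [if_neg, mul_zero]
    intro hu'
    exact hne (hmin u hu' (hh.2 u hu))
  · intro h; exact absurd hh.1 h

/-! ### Weights and conclusion -/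

theorem wdeg_eq {n : ℕ} (w : MVar n → ℝ) (t : Mon (MVar n)) :
    wdeg w t = Finsupp.linearCombination ℕ w t := by
  simp [wdeg, Finsupp.linearCombination_apply]

/-- Weights on `NV` extending `w`. -/
noncomputable def extW {n : ℕ} (w : MVar n → ℝ) : NV → ℝ := Function.extend toNV w 1

theorem extW_apply {n : ℕ} (w : MVar n → ℝ) (x : MVar n) : extW w (toNV x) = w x :=
  toNV_injective.extend_apply _ _ _

theorem extW_pos {n : ℕ} (w : MVar n → ℝ) (hpos : ∀ x, 0 < w x) (x : NV) : 0 < extW w x := by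
  by_cases h : ∃ y : MVar n, toNV y = x
  · obtain ⟨y, rfl⟩ := h
    rw [extW_apply]; exact hpos y
  · rw [extW, Function.extend_apply' _ _ _ h]; simp

theorem wdeg_map {n : ℕ} (w : MVar n → ℝ) (t : Mon (MVar n)) :
    wdeg w t = Finsupp.linearCombination ℕ (extW w) (Finsupp.mapDomain toNV t) := by
  rw [wdeg_eq, Finsupp.linearCombination_mapDomain]
  congr 2
  funext x
  exact (extW_apply w x).symm

theorem lin_nonneg (W : NV → ℝ) (hW : ∀ x, 0 < W x) (t : NV →₀ ℕ) :
    0 ≤ Finsupp.linearCombination ℕ W t := by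
  rw [Finsupp.linearCombination_apply]
  exact Finset.sum_nonneg fun x _ => smul_nonneg (by omega) (hW x).le

/-- The monomial `ℓ c^a c̄^b` is the least element of its closed set. -/
theorem AA_min {n a b : ℕ} (W : NV → ℝ) (hW : ∀ x, 0 < W x) (h1 : W .c < W .b)
    (h2 : W .cb < W .bb) (h3 : W .l < W (.C false 3 n)) {t : NV →₀ ℕ} (h : AA n a b t)
    (hle : Finsupp.linearCombination ℕ W t
      ≤ Finsupp.linearCombination ℕ W (gv .l + a • gv .c + b • gv .cb)) :
    t = gv .l + a • gv .c + b • gv .cb := by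
  obtain ⟨a1, a2, b1, b2, rfl, rfl, rfl | ⟨σ, v, k, hσ, hk, rfl⟩⟩ := h
  · simp only [smallPart, map_add, map_nsmul, Finsupp.linearCombination_single, one_smul,
      nsmul_eq_mul, Nat.cast_add] at hle
    have hB := hW (.B false 3 n)
    have e1 : (0:ℝ) ≤ a2 := by positivity
    have e2 : (0:ℝ) ≤ b2 := by positivity
    have e3 : (0:ℝ) ≤ a2 * (W .b - W .c) := mul_nonneg e1 (by linarith)
    have e4 : (0:ℝ) ≤ b2 * (W .bb - W .cb) := mul_nonneg e2 (by linarith)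
    have e5 : ((a2:ℝ) + b2) * W (.B false 3 n) ≤ 0 := by nlinarith
    have e6 : (a2:ℝ) + b2 ≤ 0 := by
      by_contra hc
      have := mul_pos (not_le.1 hc) hB
      linarith
    have e7 : a2 + b2 = 0 := by
      have : ((a2 + b2 : ℕ) : ℝ) ≤ 0 := by push_cast; exact e6
      have : a2 + b2 ≤ 0 := by exact_mod_cast this
      omega
    obtain rfl : a2 = 0 := by omega
    obtain rfl : b2 = 0 := by omega
    simp only [smallPart]
    module
  · exfalso
    simp only [smallPart, map_add, map_nsmul, Finsupp.linearCombination_single, one_smul,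
      nsmul_eq_mul, Nat.cast_add] at hle
    have hσ := lin_nonneg W hW σ
    have e1 : (0:ℝ) ≤ a2 := by positivity
    have e2 : (0:ℝ) ≤ b2 := by positivity
    have e3 : (0:ℝ) ≤ a2 * (W .b - W .c) := mul_nonneg e1 (by linarith)
    have e4 : (0:ℝ) ≤ b2 * (W .bb - W .cb) := mul_nonneg e2 (by linarith)
    have e5 : (0:ℝ) ≤ k * W (.B false 3 n) := mul_nonneg (by positivity) (hW _).le
    nlinarith

/-- The monomial `ℓ^j c̄^a c^b`. -/
noncomputable def topMon (n j a b : ℕ) : Mon (MVar n) :=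
  Finsupp.single vl j + Finsupp.single vcb a + Finsupp.single vc b

theorem map_topMon (n j a b : ℕ) : Finsupp.mapDomain toNV (topMon n j a b) =
    j • gv .l + b • gv .c + a • gv .cb := by
  simp only [topMon, Finsupp.mapDomain_add, Finsupp.mapDomain_single, toNV, gv,
    Finsupp.smul_single, smul_eq_mul, mul_one]
  abel

theorem le_topMon {n m1 m2 : ℕ} {t : Mon (MVar n)} (h : t ≤ topMon n 1 m1 m2) :
    t = topMon n (t vl) (t vcb) (t vc) ∧ t vl ≤ 1 ∧ t vcb ≤ m1 ∧ t vc ≤ m2 := by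
  refine ⟨?_, by simpa [topMon] using h vl, by simpa [topMon] using h vcb,
    by simpa [topMon] using h vc⟩
  ext x
  have := h x
  cases x <;> simp_all [topMon]

theorem not_head_one {n : ℕ} (w : MVar n → ℝ) (hpos : ∀ x, 0 < w x)
    (h1 : w vc < w vb) (h2 : w vcb < w vbb) (h3 : w vl < w (vC false 3 (Fin.last n)))
    {a b : ℕ} (hab : a + b < en n) {p : MPoly n} (hp : p ∈ Ideal.span (FF n))
    (hh : IsHT (wLe w) p (topMon n 1 a b)) : False := by
  refine no_head (wLe w) (fun u => AA n b a (Finsupp.mapDomain toNV u)) ?_ _ ?_ ?_ hp hh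
  · intro α β hr u
    simp only [Finsupp.mapDomain_add]
    exact ⟨AA_closed (by omega) (Or.inl hr), AA_closed (by omega) (Or.inr hr)⟩
  · refine ⟨b, 0, a, 0, rfl, rfl, Or.inl ?_⟩
    rw [map_topMon, smallPart]
    module
  · rintro u hu (rfl | hlt)
    · rfl
    · apply Finsupp.mapDomain_injective toNV_injective
      rw [map_topMon, one_smul]
      refine AA_min (extW w) (extW_pos w hpos) ?_ ?_ ?_ hu ?_
      · have e1 := extW_apply w vc
        have e2 := extW_apply w vb
        simp only [toNV] at e1 e2
        rwa [e1, e2]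
      · have e1 := extW_apply w vcb
        have e2 := extW_apply w vbb
        simp only [toNV] at e1 e2
        rwa [e1, e2]
      · have e1 := extW_apply w vl
        have e2 := extW_apply w (vC false 3 (Fin.last n))
        simp only [toNV, Fin.val_last] at e1 e2
        rwa [e1, e2]
      · rw [wdeg_map, wdeg_map, map_topMon, one_smul] at hlt
        exact hlt.le

theorem not_head_zero {n : ℕ} (w : MVar n → ℝ)
    {a b : ℕ} {p : MPoly n} (hp : p ∈ Ideal.span (FF n))
    (hh : IsHT (wLe w) p (topMon n 0 a b)) : False := by
  have key : ∀ u α : NV →₀ ℕ, (∃ x, x ≠ .c ∧ x ≠ .cb ∧ α x ≠ 0) →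
      u + α ≠ Finsupp.mapDomain toNV (topMon n 0 a b) := by
    rintro u α ⟨x, hx1, hx2, hx⟩ heq
    have := DFunLike.congr_fun heq x
    rw [map_topMon] at this
    simp [Finsupp.single_apply, hx1.symm, hx2.symm] at this
    exact hx this.2
  refine no_head (wLe w) (fun u => Finsupp.mapDomain toNV u =
    Finsupp.mapDomain toNV (topMon n 0 a b)) ?_ _ rfl ?_ hp hh
  · intro α β hr u
    simp only [Finsupp.mapDomain_add]
    exact ⟨fun h => absurd h (key _ _ hr.ne.1), fun h => absurd h (key _ _ hr.ne.2)⟩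
  · intro u hu _
    exact Finsupp.mapDomain_injective toNV_injective hu

theorem IsHT.unique {n : ℕ} {w : MVar n → ℝ} {p : MPoly n} {t u : Mon (MVar n)}
    (ht : IsHT (wLe w) p t) (hu : IsHT (wLe w) p u) : t = u := by
  rcases ht.2 u hu.1 with h | h
  · exact h.symm
  · rcases hu.2 t ht.1 with h' | h'
    · exact h'
    · exact absurd h (lt_asymm h')

theorem top_head {n : ℕ} (w : MVar n → ℝ) (hpos : ∀ x, 0 < w x) (h : w vs < w vl)
    {m1 m2 : ℕ} (hm : m1 + m2 = en n) : ∃ p ∈ Ideal.span (FF n), p ≠ 0 ∧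
      IsHT (wLe w) p (topMon n 1 m1 m2) := by
  have hne : Finsupp.single vs 1 ≠ topMon n 1 m1 m2 := by
    intro h
    have := DFunLike.congr_fun h vs
    simp [topMon] at this
  have hmem := top_mem n m1 m2 hm
  have hform : (X vl * X vcb ^ m1 * X vc ^ m2 + X vs : MPoly n) =
      monomial (topMon n 1 m1 m2) 1 + monomial (Finsupp.single vs 1) 1 := by
    simp [topMon, X, monomial_mul, monomial_pow, Finsupp.smul_single]
  rw [hform] at hmem
  have hsupp : topMon n 1 m1 m2 ∈
      (monomial (topMon n 1 m1 m2) 1 + monomial (Finsupp.single vs 1) 1 : MPoly n).support := by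
    rw [mem_support_iff, coeff_add, coeff_monomial, coeff_monomial, if_pos rfl, if_neg hne]
    simp
  refine ⟨_, hmem, ?_, hsupp, ?_⟩
  · intro h0
    rw [h0] at hsupp
    simp at hsupp
  · intro u hu
    rw [mem_support_iff, coeff_add, coeff_monomial, coeff_monomial] at hu
    by_cases h1 : topMon n 1 m1 m2 = u
    · exact Or.inl h1.symm
    · rw [if_neg h1, zero_add] at hu
      have h2 : Finsupp.single vs 1 = u := by
        by_contra h2
        rw [if_neg h2] at hu
        exact hu rfl
      subst h2
      right
      simp only [wdeg_eq, topMon, map_add, Finsupp.linearCombination_single, nsmul_eq_mul,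
        Nat.cast_one, one_mul]
      have e1 : 0 ≤ (m1 : ℝ) * w vcb := mul_nonneg (by positivity) (hpos _).le
      have e2 : 0 ≤ (m2 : ℝ) * w vc := mul_nonneg (by positivity) (hpos _).le
      linarith

open MVar in
/-- Let `w` be an injective weight map with positive, `ℚ`-linearly
independent values, `w(s) < w(c) < w(c̄) < w(ℓ) < w(b) < w(b̄)`, and `w(y) < w(x)` for every
`y ∈ {s,c,c̄,ℓ,b,b̄}` and variable `x` outside this set. Then every reduced Gröbner basis `G`
of `⟨𝓕⟩` with respect to the weighted order `≼_w` satisfies `|G| ≥ 2^(2^n)` and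
`|{p ∈ G : deg p ≥ 2^(2^n)}| ≥ 2^(2^n)`. -/
theorem stmt19 (n : ℕ) (w : MVar n → ℝ)
    (hinj : Function.Injective w)
    (hpos : ∀ x, 0 < w x)
    (hind : LinearIndependent ℚ w)
    (h1 : w vs < w vc) (h2 : w vc < w vcb) (h3 : w vcb < w vl)
    (h4 : w vl < w vb) (h5 : w vb < w vbb)
    (hsmall : ∀ x : MVar n, x ∉ ({vs, vc, vcb, vl, vb, vbb} : Set (MVar n)) →
      ∀ y ∈ ({vs, vc, vcb, vl, vb, vbb} : Set (MVar n)), w y < w x)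
    (G : Finset (MPoly n))
    (hG : IsReducedGB (wLe w) G (Ideal.span (FF n))) :
    en n ≤ G.card ∧ en n ≤ (G.filter fun p => en n ≤ p.totalDegree).card := by
  have hC : ∀ y ∈ ({vs, vc, vcb, vl, vb, vbb} : Set (MVar n)),
      w y < w (vC false 3 (Fin.last n)) := hsmall _ (by simp)
  obtain ⟨⟨hGI, -, hHT⟩, -⟩ := hG
  have ex : ∀ m1 : ℕ, m1 < en n → ∃ g ∈ G, IsHT (wLe w) g (topMon n 1 m1 (en n - m1)) := by
    intro m1 hm1
    obtain ⟨p, hp, hp0, hph⟩ := top_head w hpos (by linarith) (m1 := m1) (m2 := en n - m1)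
      (by omega)
    have hin : (monomial (topMon n 1 m1 (en n - m1)) 1 : MPoly n) ∈
        Ideal.span (HTset (wLe w) (↑G : Set (MPoly n))) := by
      rw [← hHT]
      exact Ideal.subset_span ⟨p, hp, hp0, _, hph, rfl⟩
    have himg : HTset (wLe w) (↑G : Set (MPoly n)) =
        (fun t => (monomial t 1 : MPoly n)) '' {t | ∃ f ∈ G, f ≠ 0 ∧ IsHT (wLe w) f t} := by
      ext q
      constructor
      · rintro ⟨f, hf, hf0, t, ht, rfl⟩
        exact ⟨t, ⟨f, hf, hf0, ht⟩, rfl⟩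
      · rintro ⟨t, ⟨f, hf, hf0, ht⟩, rfl⟩
        exact ⟨f, hf, hf0, t, ht, rfl⟩
    rw [himg, mem_ideal_span_monomial_image] at hin
    obtain ⟨t, ⟨g, hg, -, hgt⟩, hle⟩ := hin (topMon n 1 m1 (en n - m1)) (by simp)
    refine ⟨g, hg, ?_⟩
    obtain ⟨ht, k1, k2, k3⟩ := le_topMon hle
    have hgI := hGI hg
    rw [ht] at hgt
    generalize t vl = j at *
    generalize t vcb = a at *
    generalize t vc = b at *
    rcases Nat.eq_zero_or_pos j with rfl | hj
    · exact (not_head_zero w hgI hgt).elim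
    · obtain rfl : j = 1 := by omega
      by_cases hab : a + b < en n
      · exact (not_head_one w hpos (by linarith) (by linarith) (hC _ (by simp)) hab hgI hgt).elim
      · obtain rfl : a = m1 := by omega
        obtain rfl : b = en n - a := by omega
        exact hgt
  choose! g hg hgt using ex
  have hcard : en n ≤ (G.filter fun p => en n ≤ p.totalDegree).card := by
    have := Finset.card_le_card_of_injOn (s := Finset.range (en n))
      (t := G.filter fun p => en n ≤ p.totalDegree) g ?_ ?_
    · simpa using this
    · intro m hm
      have hm' : m < en n := by simpa using hm
      simp only [Finset.coe_filter, Set.mem_setOf_eq]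
      refine ⟨hg m hm', ?_⟩
      have h := le_totalDegree (hgt m hm').1
      refine le_trans ?_ h
      rw [topMon, Finsupp.sum_add_index' (by simp) (by simp),
        Finsupp.sum_add_index' (by simp) (by simp), Finsupp.sum_single_index rfl,
        Finsupp.sum_single_index rfl, Finsupp.sum_single_index rfl]
      omega
    · intro m hm m' hm' heq
      have hm : m < en n := by simpa using hm
      have hm' : m' < en n := by simpa using hm'
      have e1 := hgt m hm
      rw [heq] at e1
      have := DFunLike.congr_fun (e1.unique (hgt m' hm')) vcb
      simpa [topMon] using this
  exact ⟨hcard.trans (Finset.card_filter_le _ _), hcard⟩
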